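/- arXiv:2103.02321 — 2 statements merged into one kernel-verified Lean document; each statement's English description precedes it below -/
import Mathlib

section
/- (UL factorization for the Geronimus transformation.) Let v be quasi-definite with SMOP (P_n), Jacobi matrix J and associated first-kind polynomials (P^{(1)}_n), let c ∈ ℂ, and let v̂ be a canonical Geronimus transformation of v at c (i.e. (x−c)v̂ = v) whose free moment v̂_0 satisfies v_0·P^{(1)}_{n−1}(c) + v̂_0·P_n(c) ≠ 0 for all n ≥ 1; suppose v̂ is quasi-definite with SMOP (P̂_n), P̂_n(c) ≠ 0 for all n, and Jacobi matrix Ĵ. Define U as the upper bidiagonal matrix with diagonal β_n = −P̂_{n+1}(c)/P̂_n(c) and superdiagonal 1, and L as the unit lower bidiagonal matrix with subdiagonal ℓ_n = −(v_0·P^{(1)}_{n−1}(c) + v̂_0·P_n(c))/(v_0·P^{(1)}_{n−2}(c) + v̂_0·P_{n−1}(c)). Then, entrywise, J − cI = U·L and Ĵ − cI = L·U. -/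
open Polynomial

noncomputable section

/-- Apply a linear functional (identified with its moment sequence) to a polynomial:
`⟨u, p⟩ = Σ_k c_k u_k` for `p = Σ_k c_k x^k`. -/
def fapply (u : ℕ → ℂ) (p : Polynomial ℂ) : ℂ := p.sum fun k ck => ck * u k

/-- `P` is the sequence of monic orthogonal polynomials (SMOP) of the functional `u`. -/
def IsSMOP (u : ℕ → ℂ) (P : ℕ → Polynomial ℂ) : Prop :=
  (∀ n, (P n).Monic) ∧ (∀ n, (P n).natDegree = n) ∧
    (∀ n m, n ≠ m → fapply u (P n * P m) = 0) ∧ (∀ n, fapply u (P n * P n) ≠ 0)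

/-- A functional is quasi-definite iff it admits a SMOP. -/
def IsQuasiDefinite (u : ℕ → ℂ) : Prop := ∃ P, IsSMOP u P

/-- Three term recurrence relation `x P_n = P_{n+1} + b_n P_n + a_n P_{n-1}`,
with `P_{-1} = 0`, `P_0 = 1`. -/
def HasTTRR (P : ℕ → Polynomial ℂ) (a b : ℕ → ℂ) : Prop :=
  P 0 = 1 ∧ X * P 0 = P 1 + C (b 0) * P 0 ∧
    ∀ n, 1 ≤ n → X * P n = P (n + 1) + C (b n) * P n + C (a n) * P (n - 1)

/-- Wronskian `W(p,q)(x) = p(x) q'(x) - p'(x) q(x)`. -/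
def Wr (p q : Polynomial ℂ) (x : ℂ) : ℂ :=
  p.eval x * (derivative q).eval x - (derivative p).eval x * q.eval x

/-- The monic Jacobi matrix with diagonal `b`, superdiagonal `1` and subdiagonal
entries `J_{n+1,n} = a_{n+1}`. -/
def jacobi (a b : ℕ → ℂ) (i j : ℕ) : ℂ :=
  if i = j then b i else if j = i + 1 then 1 else if i = j + 1 then a i else 0

/-- Entrywise product of semi-infinite (banded) matrices; the sum has finite support. -/
def mprod (A B : ℕ → ℕ → ℂ) (i j : ℕ) : ℂ := ∑' k, A i k * B k j

/-- `w` is the moment sequence of the inverse functional `u⁻¹`: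
the convolution of the moments of `u` and `w` is `(1,0,0,…)`. -/
def IsInverseMoments (u w : ℕ → ℂ) : Prop :=
  ∀ n, ∑ k ∈ Finset.range (n + 1), u k * w (n - k) = if n = 0 then 1 else 0

/-- Apply a functional `u` to the second (outer) variable `y` of a bivariate polynomial
`D = Σ_k q_k(x) y^k`, giving `Σ_k u_k q_k(x)`. -/
def fapplyY (u : ℕ → ℂ) (D : Polynomial (Polynomial ℂ)) : Polynomial ℂ :=
  D.sum fun k q => u k • q

/-- `P^{(1)}_{n-1}`, with the convention `P^{(1)}_{-1} = 0`. -/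
def P1prev (P1 : ℕ → Polynomial ℂ) (n : ℕ) : Polynomial ℂ :=
  if n = 0 then 0 else P1 (n - 1)

lemma fa_add (u : ℕ → ℂ) (p q : Polynomial ℂ) : fapply u (p + q) = fapply u p + fapply u q := by
  unfold fapply
  exact Polynomial.sum_add_index p q _ (by simp) (by intros; ring)

lemma fa_C (u : ℕ → ℂ) (r : ℂ) (p : Polynomial ℂ) : fapply u (C r * p) = r * fapply u p := by
  unfold fapply
  rw [← smul_eq_C_mul, Polynomial.sum_smul_index _ _ _ (by simp), Polynomial.sum_def,
    Polynomial.sum_def, Finset.mul_sum]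
  exact Finset.sum_congr rfl (by intros; ring)

lemma fa_sub (u : ℕ → ℂ) (p q : Polynomial ℂ) : fapply u (p - q) = fapply u p - fapply u q := by
  have h := fa_add u p (C (-1) * q)
  rw [fa_C] at h
  have e : p - q = p + C (-1) * q := by simp; ring
  rw [e, h]; ring

lemma fa_zero (u : ℕ → ℂ) : fapply u 0 = 0 := by simp [fapply]

lemma fa_one (u : ℕ → ℂ) : fapply u 1 = u 0 := by
  unfold fapply
  rw [← C_1, Polynomial.sum_C_index] <;> simp

lemma fa_ger (v vh : ℕ → ℂ) (c : ℂ) (hger : ∀ n, vh (n + 1) - c * vh n = v n)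
    (p : Polynomial ℂ) : fapply vh ((X - C c) * p) = fapply v p := by
  induction p using Polynomial.induction_on' with
  | add p q hp hq => rw [mul_add, fa_add, fa_add, hp, hq]
  | monomial n r =>
    rw [sub_mul, fa_sub, fa_C, X_mul_monomial]
    unfold fapply
    rw [Polynomial.sum_monomial_index _ _ (by simp), Polynomial.sum_monomial_index _ _ (by simp),
      Polynomial.sum_monomial_index _ _ (by simp), ← hger]
    ring

lemma smop_deg {u : ℕ → ℂ} {P : ℕ → Polynomial ℂ} (hP : IsSMOP u P) (n : ℕ) :
    (P n).degree = n := by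
  rw [degree_eq_natDegree (hP.1 n).ne_zero, hP.2.1]

lemma smop_coeff {u : ℕ → ℂ} {P : ℕ → Polynomial ℂ} (hP : IsSMOP u P) (n : ℕ) :
    (P n).coeff n = 1 := by
  have := hP.1 n
  unfold Monic leadingCoeff at this
  rwa [hP.2.1] at this

lemma red_deg {u : ℕ → ℂ} {P : ℕ → Polynomial ℂ} (hP : IsSMOP u P) (m : ℕ) (p : Polynomial ℂ)
    (hp : p.degree < (m + 1 : ℕ)) : (p - C (p.coeff m) * P m).degree < m := by
  rw [degree_lt_iff_coeff_zero] at hp ⊢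
  intro k hk
  rw [coeff_sub, coeff_C_mul]
  rcases hk.eq_or_lt with rfl | h
  · rw [smop_coeff hP]; ring
  · rw [hp k h, coeff_eq_zero_of_natDegree_lt (p := P m) (by rw [hP.2.1]; exact h)]; simp

lemma smop_orth {u : ℕ → ℂ} {P : ℕ → Polynomial ℂ} (hP : IsSMOP u P) (n m : ℕ) (hm : m ≤ n)
    (p : Polynomial ℂ) (hp : p.degree < m) : fapply u (P n * p) = 0 := by
  induction m generalizing p with
  | zero =>
    have : p = 0 := by simpa using hp
    rw [this, mul_zero, fa_zero]
  | succ m ih =>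
    have h := ih (by omega) _ (red_deg hP m p hp)
    have e : P n * (p - C (p.coeff m) * P m) = P n * p - C (p.coeff m) * (P n * P m) := by ring
    rw [e, fa_sub, fa_C, hP.2.2.1 n m (by omega)] at h
    simpa using h

lemma smop_zero {u : ℕ → ℂ} {P : ℕ → Polynomial ℂ} (hP : IsSMOP u P) (n : ℕ)
    (q : Polynomial ℂ) (hq : q.degree < n)
    (h : ∀ p : Polynomial ℂ, p.degree < n → fapply u (q * p) = 0) : q = 0 := by
  induction n with
  | zero => simpa using hq
  | succ n ih =>
    refine ih ?_ (fun p hp => h p (hp.trans (by exact_mod_cast Nat.lt_succ_self n)))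
    have h1 := h (P n) (by rw [smop_deg hP]; exact_mod_cast Nat.lt_succ_self n)
    have h2 := smop_orth hP n n le_rfl _ (red_deg hP n q hq)
    have e : P n * (q - C (q.coeff n) * P n) = q * P n - C (q.coeff n) * (P n * P n) := by ring
    rw [e, fa_sub, fa_C, h1] at h2
    have h3 : q.coeff n = 0 := by
      have := hP.2.2.2 n
      simpa [this] using h2
    have := red_deg hP n q hq
    simpa [h3] using this

lemma smop_indep {u : ℕ → ℂ} {P : ℕ → Polynomial ℂ} (hP : IsSMOP u P) (n : ℕ) (r s : ℂ)
    (h : C r * P (n + 1) + C s * P n = 0) : r = 0 ∧ s = 0 := by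
  have h1 := congrArg (fun p => p.coeff (n + 1)) h
  simp only [coeff_add, coeff_C_mul, smop_coeff hP, coeff_zero] at h1
  rw [coeff_eq_zero_of_natDegree_lt (by rw [hP.2.1]; omega)] at h1
  have hr : r = 0 := by simpa using h1
  have h2 := congrArg (fun p => p.coeff n) h
  simp only [coeff_add, coeff_C_mul, smop_coeff hP, coeff_zero, hr] at h2
  exact ⟨hr, by simpa using h2⟩

lemma monic_diff {u w : ℕ → ℂ} {P Q : ℕ → Polynomial ℂ} (hP : IsSMOP u P) (hQ : IsSMOP w Q)
    (n : ℕ) : (P n - Q n).degree < n := by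
  have := red_deg hQ n (P n) (by rw [smop_deg hP]; exact_mod_cast Nat.lt_succ_self n)
  simpa [smop_coeff hP] using this

/-- `(x-c) P_n = P̂_{n+1} + β_n P̂_n`. -/
lemma ger_B {v vh : ℕ → ℂ} {c : ℂ} {P Ph : ℕ → Polynomial ℂ} (hP : IsSMOP v P)
    (hger : ∀ n, vh (n + 1) - c * vh n = v n) (hPh : IsSMOP vh Ph) (n : ℕ)
    (hc : (Ph n).eval c ≠ 0) :
    (X - C c) * P n = Ph (n + 1) + C (-((Ph (n + 1)).eval c / (Ph n).eval c)) * Ph n := by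
  set R := (X - C c) * P n - Ph (n + 1) with hR
  have hdeg : R.degree < (n + 1 : ℕ) := by
    rw [degree_lt_iff_coeff_zero]
    intro k hk
    obtain ⟨k, rfl⟩ : ∃ j, k = j + 1 := ⟨k - 1, by omega⟩
    have h1 : (P n).coeff (k + 1) = 0 :=
      coeff_eq_zero_of_natDegree_lt (by rw [hP.2.1]; omega)
    rw [hR, coeff_sub, sub_mul, coeff_sub, coeff_X_mul, coeff_C_mul, h1]
    rcases (show n ≤ k by omega).eq_or_lt with rfl | h
    · rw [smop_coeff hP, smop_coeff hPh]; ring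
    · rw [coeff_eq_zero_of_natDegree_lt (p := P n) (by rw [hP.2.1]; omega),
        coeff_eq_zero_of_natDegree_lt (p := Ph (n + 1)) (by rw [hPh.2.1]; omega)]; ring
  have h0 : R - C (R.coeff n) * Ph n = 0 := by
    refine smop_zero hPh n _ (red_deg hPh n R hdeg) (fun p hp => ?_)
    have e : (R - C (R.coeff n) * Ph n) * p
        = (X - C c) * (P n * p) - Ph (n + 1) * p - C (R.coeff n) * (Ph n * p) := by
      rw [hR]; ring
    rw [e, fa_sub, fa_sub, fa_C, fa_ger v vh c hger, smop_orth hP n n le_rfl p hp,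
      smop_orth hPh n n le_rfl p hp, smop_orth hPh (n + 1) n (by omega) p hp]
    ring
  generalize R.coeff n = r at h0
  have h1 : (X - C c) * P n = Ph (n + 1) + C r * Ph n := by
    rw [hR] at h0; linear_combination h0
  have h2 := congrArg (eval c) h1
  simp at h2
  have : r = -((Ph (n + 1)).eval c / (Ph n).eval c) := by
    field_simp
    linear_combination -h2
  rw [← this, h1]

/-- `P̂_{n+1} = P_{n+1} + ℓ P_n`. -/
lemma ger_A {v vh : ℕ → ℂ} {c : ℂ} {P Ph : ℕ → Polynomial ℂ} (hP : IsSMOP v P)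
    (hger : ∀ n, vh (n + 1) - c * vh n = v n) (hPh : IsSMOP vh Ph) (n : ℕ) (l : ℂ)
    (hl : fapply vh (P (n + 1)) + l * fapply vh (P n) = 0) :
    Ph (n + 1) = P (n + 1) + C l * P n := by
  suffices h : P (n + 1) - Ph (n + 1) + C l * P n = 0 by linear_combination -h
  refine smop_zero hPh (n + 1) _ ?_ (fun p hp => ?_)
  · refine (degree_add_le _ _).trans_lt (max_lt (monic_diff hP hPh _) ?_)
    rw [degree_lt_iff_coeff_zero]
    intro k hk
    rw [coeff_C_mul, coeff_eq_zero_of_natDegree_lt (by rw [hP.2.1]; omega), mul_zero]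
  · obtain ⟨q, hq⟩ : (X - C c) ∣ p - C (p.eval c) := X_sub_C_dvd_sub_C_eval
    have hqd : q.degree < n := by
      rw [degree_lt_iff_coeff_zero]
      by_contra! hk
      have hq0 : q ≠ 0 := by rintro rfl; simp at hk
      obtain ⟨k, hk, hk'⟩ := hk
      have h1 : n ≤ q.natDegree := hk.trans (le_natDegree_of_ne_zero hk')
      have h2 : ((X - C c) * q).natDegree = q.natDegree + 1 := by
        rw [natDegree_mul (X_sub_C_ne_zero c) hq0, natDegree_X_sub_C]; omega
      rw [← hq, natDegree_sub_C] at h2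
      have h3 : p.natDegree < n + 1 := by
        rcases eq_or_ne p 0 with rfl | hp0
        · simp
        · exact (natDegree_lt_iff_degree_lt hp0).2 hp
      omega
    have e : (P (n + 1) - Ph (n + 1) + C l * P n) * p
        = (X - C c) * (P (n + 1) * q) + C l * ((X - C c) * (P n * q))
          + C (p.eval c) * (P (n + 1)) + C (p.eval c) * (C l * P n) - Ph (n + 1) * p := by
      linear_combination (P (n + 1) + C l * P n) * hq
    rw [e, fa_sub, fa_add, fa_add, fa_add, fa_C, fa_C, fa_C, fa_C, fa_ger v vh c hger,
      fa_ger v vh c hger, smop_orth hP n n le_rfl q hqd, smop_orth hP (n + 1) n (by omega) q hqd,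
      smop_orth hPh (n + 1) (n + 1) le_rfl p hp]
    linear_combination (p.eval c) * hl

lemma ger_e {v vh : ℕ → ℂ} {c : ℂ} {P P1 : ℕ → Polynomial ℂ} {a b : ℕ → ℂ} (hP : IsSMOP v P)
    (hger : ∀ n, vh (n + 1) - c * vh n = v n) (hrec : HasTTRR P a b)
    (hP1 : HasTTRR P1 (fun n => a (n + 1)) (fun n => b (n + 1))) (n : ℕ) :
    fapply vh (P n) = v 0 * (P1prev P1 n).eval c + vh 0 * (P n).eval c := by
  have hv : ∀ n, 1 ≤ n → fapply v (P n) = 0 := fun n hn => by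
    have := hP.2.2.1 n 0 (by omega)
    rwa [hrec.1, mul_one] at this
  have hx : ∀ n, fapply vh (X * P n) = c * fapply vh (P n) + fapply v (P n) := fun n => by
    rw [← fa_ger v vh c hger, ← fa_C, ← fa_add]; congr 1; ring
  have e0 : fapply vh (P 0) = vh 0 := by rw [hrec.1, fa_one]
  have v0 : fapply v (P 0) = v 0 := by rw [hrec.1, fa_one]
  have p0 : (P 0).eval c = 1 := by rw [hrec.1]; simp
  have q0 : (P1 0).eval c = 1 := by rw [hP1.1]; simp
  induction n using Nat.strong_induction_on with
  | _ n ih =>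
  match n with
  | 0 => rw [e0, p0]; simp [P1prev]
  | 1 =>
    have h := hx 0
    rw [hrec.2.1, fa_add, fa_C, e0, v0] at h
    have h' := congrArg (eval c) hrec.2.1
    simp [p0] at h'
    simp [P1prev, q0]
    linear_combination h + vh 0 * h'
  | 2 =>
    have h := hx 1
    have ih1 := ih 1 (by omega)
    have t := hrec.2.2 1 le_rfl
    have t' := congrArg (eval c) t
    have s := congrArg (eval c) hP1.2.1
    rw [t, fa_add, fa_add, fa_C, fa_C, hv 1 le_rfl] at h
    simp [p0, e0, P1prev, q0] at h t' s ih1 ⊢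
    linear_combination h + vh 0 * t' + v 0 * s + (c - b 1) * ih1
  | (n + 3) =>
    have h := hx (n + 2)
    have ih1 := ih (n + 1) (by omega)
    have ih2 := ih (n + 2) (by omega)
    have t := hrec.2.2 (n + 2) (by omega)
    have t' := congrArg (eval c) t
    have s := congrArg (eval c) (hP1.2.2 (n + 1) (by omega))
    rw [t, fa_add, fa_add, fa_C, fa_C, hv (n + 2) (by omega)] at h
    simp [P1prev] at h t' s ih1 ih2 ⊢
    linear_combination h + vh 0 * t' + v 0 * s + (c - b (n + 2)) * ih2 - a (n + 2) * ih1

/-- UL factorization for the Geronimus transformation `(x-c)v̂ = v`: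
`J - cI = U·L` and `Ĵ - cI = L·U`. -/
theorem stmt_15 (v : ℕ → ℂ) (c : ℂ) (P : ℕ → Polynomial ℂ) (hP : IsSMOP v P)
    (a b : ℕ → ℂ) (hrec : HasTTRR P a b) (ha : ∀ n, 1 ≤ n → a n ≠ 0)
    (P1 : ℕ → Polynomial ℂ)
    (hP1 : HasTTRR P1 (fun n => a (n + 1)) (fun n => b (n + 1)))
    (vh : ℕ → ℂ) (hger : ∀ n, vh (n + 1) - c * vh n = v n)
    (hcond : ∀ n, 1 ≤ n → v 0 * (P1 (n - 1)).eval c + vh 0 * (P n).eval c ≠ 0)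
    (Ph : ℕ → Polynomial ℂ) (hPh : IsSMOP vh Ph)
    (ah bh : ℕ → ℂ) (hrech : HasTTRR Ph ah bh)
    (hPhc : ∀ n, (Ph n).eval c ≠ 0)
    (ell beta : ℕ → ℂ)
    (hell : ∀ n, 1 ≤ n → ell n =
      -(v 0 * (P1prev P1 n).eval c + vh 0 * (P n).eval c)
        / (v 0 * (P1prev P1 (n - 1)).eval c + vh 0 * (P (n - 1)).eval c))
    (hbeta : ∀ n, beta n = -((Ph (n + 1)).eval c / (Ph n).eval c))
    (L U : ℕ → ℕ → ℂ)
    (hL : ∀ i j, L i j = if i = j then 1 else if i = j + 1 then ell i else 0)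
    (hU : ∀ i j, U i j = if j = i then beta i else if j = i + 1 then 1 else 0) :
    (∀ i j, (jacobi a b i j - if i = j then c else 0) = mprod U L i j)
    ∧ (∀ i j, (jacobi ah bh i j - if i = j then c else 0) = mprod L U i j) := by
  have he := ger_e hP hger hrec hP1
  have he0 : ∀ n, fapply vh (P n) ≠ 0 := by
    intro n
    rcases n with _ | n
    · have := hPh.2.2.2 0
      rwa [hrech.1, mul_one, ← hrec.1] at this
    · rw [he]
      simpa [P1prev] using hcond (n + 1) (by omega)
  have hB : ∀ n, (X - C c) * P n = Ph (n + 1) + C (beta n) * Ph n := fun n => by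
    rw [hbeta]; exact ger_B hP hger hPh n (hPhc n)
  have hA : ∀ n, Ph (n + 1) = P (n + 1) + C (ell (n + 1)) * P n := fun n => by
    apply ger_A hP hger hPh
    have h := hell (n + 1) (by omega)
    rw [Nat.add_sub_cancel, ← he, ← he] at h
    rw [h]
    have := he0 n
    field_simp
    ring
  have hz : Ph 0 = P 0 := by rw [hrec.1, hrech.1]
  have hzero : b 0 - c = beta 0 + ell 1 := by
    have h1 : C (b 0 - c - beta 0 - ell 1) * P 0 = 0 := by
      simp only [C_sub]
      linear_combination - hrec.2.1 + hB 0 + hA 0 + C (beta 0) * hz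
    have h2 : b 0 - c - beta 0 - ell 1 = 0 := by
      rw [hrec.1, mul_one] at h1; exact C_eq_zero.1 h1
    linear_combination h2
  have hzeroh : bh 0 - c = beta 0 := by
    have h1 : C (bh 0 - c - beta 0) * Ph 0 = 0 := by
      simp only [C_sub]
      linear_combination - hrech.2.1 + hB 0 + (X - C c) * hz
    have h2 : bh 0 - c - beta 0 = 0 := by
      rw [hrech.1, mul_one] at h1; exact C_eq_zero.1 h1
    linear_combination h2
  have hs : ∀ n, b (n + 1) - c = beta (n + 1) + ell (n + 2)
      ∧ a (n + 1) = beta (n + 1) * ell (n + 1) := by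
    intro n
    have t := hrec.2.2 (n + 1) (by omega)
    rw [Nat.add_sub_cancel] at t
    have h := smop_indep hP n (b (n + 1) - c - beta (n + 1) - ell (n + 2))
      (a (n + 1) - beta (n + 1) * ell (n + 1)) (by
        simp only [C_sub, C_mul]
        linear_combination - t + hB (n + 1) + hA (n + 1) + C (beta (n + 1)) * hA n)
    exact ⟨by linear_combination h.1, by linear_combination h.2⟩
  have hsh : ∀ n, bh (n + 1) - c = beta (n + 1) + ell (n + 1)
      ∧ ah (n + 1) = ell (n + 1) * beta n := by
    intro n
    have t := hrech.2.2 (n + 1) (by omega)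
    rw [Nat.add_sub_cancel] at t
    have h := smop_indep hPh n (bh (n + 1) - c - beta (n + 1) - ell (n + 1))
      (ah (n + 1) - ell (n + 1) * beta n) (by
        simp only [C_sub, C_mul]
        linear_combination - t + hB (n + 1) + C (ell (n + 1)) * hB n + (X - C c) * hA n)
    exact ⟨by linear_combination h.1, by linear_combination h.2⟩
  have hUL : ∀ i j, mprod U L i j = beta i * L i j + L (i + 1) j := by
    intro i j
    unfold mprod
    rw [tsum_eq_sum (s := {i, i + 1})]
    · rw [Finset.sum_pair (by omega), hU i i, hU i (i + 1)]; simp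
    · intro k hk
      simp at hk
      rw [hU, if_neg hk.1, if_neg hk.2, zero_mul]
  have hLU0 : ∀ j, mprod L U 0 j = U 0 j := by
    intro j
    unfold mprod
    rw [tsum_eq_single 0]
    · rw [hL]; simp
    · intro k hk
      rw [hL, if_neg (by omega), if_neg (by omega), zero_mul]
  have hLU : ∀ i j, mprod L U (i + 1) j = ell (i + 1) * U i j + U (i + 1) j := by
    intro i j
    unfold mprod
    rw [tsum_eq_sum (s := {i, i + 1})]
    · rw [Finset.sum_pair (by omega), hL (i + 1) i, hL (i + 1) (i + 1)]; simp
    · intro k hk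
      simp at hk
      rw [hL, if_neg (by omega), if_neg (by omega), zero_mul]
  constructor
  · intro i j
    rw [hUL, hL, hL]
    unfold jacobi
    have hd : b i - c = beta i + ell (i + 1) := by
      rcases i with _ | i
      · exact hzero
      · exact (hs i).1
    rcases lt_trichotomy i j with h | rfl | h
    · by_cases h' : j = i + 1
      · subst h'; simp [show i ≠ i + 1 + 1 by omega]
      · rw [if_neg (by omega), if_neg (by omega), if_neg (by omega), if_neg (by omega),
          if_neg (by omega), if_neg (by omega), if_neg (by omega), if_neg (by omega)]; ring
    · simp [hd]
    · by_cases h' : i = j + 1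
      · subst h'; simp [(hs j).2, show j ≠ j + 1 + 1 by omega, show j + 1 + 1 ≠ j by omega]
      · rw [if_neg (by omega), if_neg (by omega), if_neg (by omega), if_neg (by omega),
          if_neg (by omega), if_neg (by omega), if_neg (by omega), if_neg (by omega)]; ring
  · intro i j
    rcases i with _ | i
    · rw [hLU0, hU]
      unfold jacobi
      rcases j with _ | j
      · simp [hzeroh]
      · by_cases h' : j = 0 <;> simp [h']
    · rw [hLU, hU, hU]
      unfold jacobi
      by_cases h1 : j = i
      · subst h1; simp [(hsh j).2, show j ≠ j + 1 + 1 by omega]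
      by_cases h2 : j = i + 1
      · subst h2; simp [(hsh i).1]; ring
      by_cases h3 : j = i + 2
      · subst h3; simp
      rw [if_neg (by omega), if_neg (by omega), if_neg (by omega), if_neg (by omega),
          if_neg (by omega), if_neg (by omega), if_neg (by omega), if_neg (by omega)]; ring
end
end

section
/- Let v be quasi-definite with SMOP (P_n), recurrence coefficients (a_n, b_n) and associated first-kind polynomials (P^{(1)}_n); let v̂ with (x−c)v̂ = v be quasi-definite with SMOP (P̂_n), recurrence coefficients (â_n, b̂_n), Jacobi matrix Ĵ, and assume v_0·P^{(1)}_{n−1}(c) + v̂_0·P_n(c) ≠ 0 and P̂_n(c) ≠ 0 for all n. Let β_n = −P̂_{n+1}(c)/P̂_n(c) and ℓ_n = −(v_0·P^{(1)}_{n−1}(c) + v̂_0·P_n(c))/(v_0·P^{(1)}_{n−2}(c) + v̂_0·P_{n−1}(c)). Let J_α be the Jacobi matrix of the co-recursive sequence S_n = P_n + (v_0/v̂_0)P^{(1)}_{n−1} (diagonal (b_0 + α, b_1, b_2, …) with α = −v_0/v̂_0, subdiagonal (a_1, a_2, …), superdiagonal 1), and let Ĵ^{(1)} be the Jacobi matrix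 with diagonal b̂_{n+1}, subdiagonal â_{n+2}, superdiagonal 1 (the Jacobi matrix of (P̂^{(1)}_n)). Define L̂ as the unit lower bidiagonal matrix with subdiagonal entries β_1, β_2, β_3, … and Û as the upper bidiagonal matrix with diagonal entries ℓ_1, ℓ_2, ℓ_3, … and superdiagonal 1. Then, entrywise, J_α − cI = L̂·Û and Ĵ^{(1)} − cI = Û·L̂. -/
open Polynomial

noncomputable section

def Fl (u : ℕ → ℂ) : Polynomial ℂ →ₗ[ℂ] ℂ := Polynomial.lsum (fun k => (u k) • LinearMap.id)

theorem fapply_eq (u : ℕ → ℂ) (p : Polynomial ℂ) : fapply u p = Fl u p := by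
  simp [fapply, Fl, Polynomial.lsum_apply, mul_comm]

theorem Fl_C (u : ℕ → ℂ) (x : ℂ) (p : Polynomial ℂ) : Fl u (C x * p) = x * Fl u p := by
  rw [← smul_eq_C_mul, map_smul, smul_eq_mul]

theorem Fl_one (u : ℕ → ℂ) : Fl u 1 = u 0 := by
  rw [← fapply_eq, fapply, ← C_1, sum_C_index] <;> simp

theorem Fl_mon (u : ℕ → ℂ) (n : ℕ) : Fl u (X ^ n) = u n := by
  rw [← fapply_eq, fapply, X_pow_eq_monomial, sum_monomial_index] <;> simp

theorem Fl_ger (v vh : ℕ → ℂ) (c : ℂ) (hger : ∀ n, vh (n + 1) - c * vh n = v n)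
    (p : Polynomial ℂ) : Fl vh ((X - C c) * p) = Fl v p := by
  induction p using Polynomial.induction_on' with
  | add p q hp hq => rw [mul_add, map_add, map_add, hp, hq]
  | monomial n x =>
    rw [← C_mul_X_pow_eq_monomial, Fl_C, Fl_mon,
      show (X - C c) * (C x * X ^ n) = C x * (X ^ (n + 1) - C c * X ^ n) by ring,
      Fl_C, map_sub, Fl_C, Fl_mon, Fl_mon, hger]

theorem smop_low {u : ℕ → ℂ} {P : ℕ → Polynomial ℂ} (h : IsSMOP u P) (n : ℕ)
    (N : ℕ) : N ≤ n → ∀ q : Polynomial ℂ, q.degree < N → Fl u (P n * q) = 0 := by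
  obtain ⟨hm, hd, ho, hk⟩ := h
  induction N with
  | zero =>
    intro _ q hq
    have : q = 0 := by
      ext k
      exact (degree_lt_iff_coeff_zero q 0).1 hq k (Nat.zero_le _)
    simp [this]
  | succ N ih =>
    intro hN q hq
    have h1 : (q - C (q.coeff N) * P N).degree < N := by
      rw [degree_lt_iff_coeff_zero]
      intro k hk
      rw [coeff_sub, coeff_C_mul]
      rcases Nat.eq_or_lt_of_le hk with rfl | hk
      · have := (hm N).coeff_natDegree
        rw [hd] at this
        rw [this]; ring
      · rw [(degree_lt_iff_coeff_zero q (N + 1)).1 hq k hk,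
          coeff_eq_zero_of_natDegree_lt (p := P N) (by rw [hd]; exact hk)]
        ring
    have h2 := ih (by omega) _ h1
    have h3 := ho n N (by omega)
    rw [fapply_eq] at h3
    rw [mul_sub, map_sub, show P n * (C (q.coeff N) * P N) = C (q.coeff N) * (P n * P N) by ring,
      Fl_C, h3] at h2
    simpa using h2

theorem smop_zero_s19 {u : ℕ → ℂ} {P : ℕ → Polynomial ℂ} (h : IsSMOP u P) (n : ℕ)
    (d : Polynomial ℂ) (hdn : d.degree < n)
    (hd0 : ∀ q : Polynomial ℂ, q.degree < n → Fl u (d * q) = 0) : d = 0 := by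
  by_contra hne
  set m := d.natDegree with hm
  have hmn : m < n := (natDegree_lt_iff_degree_lt hne).2 hdn
  have hPd : ∀ k, (P k).coeff k = 1 := fun k => by
    have := (h.1 k).coeff_natDegree
    rwa [h.2.1] at this
  have h1 : (d - C (d.coeff m) * P m).degree < m := by
    rw [degree_lt_iff_coeff_zero]
    intro k hk
    rw [coeff_sub, coeff_C_mul]
    rcases Nat.eq_or_lt_of_le hk with rfl | hk
    · rw [hPd]; ring
    · rw [coeff_eq_zero_of_natDegree_lt (p := d) hk,
        coeff_eq_zero_of_natDegree_lt (p := P m) (by rw [h.2.1]; exact hk)]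
      ring
  have h2 := smop_low h m m le_rfl _ h1
  have h3 := hd0 (P m) (by
    rw [degree_lt_iff_coeff_zero]
    intro k hk
    exact coeff_eq_zero_of_natDegree_lt (by rw [h.2.1]; omega))
  have h4 := h.2.2.2 m
  rw [fapply_eq] at h4
  rw [mul_sub, map_sub, show P m * (C (d.coeff m) * P m) = C (d.coeff m) * (P m * P m) by ring,
    Fl_C, mul_comm (P m) d, h3] at h2
  have h5 : d.coeff m ≠ 0 := by
    rw [hm]; exact leadingCoeff_ne_zero.2 hne
  exact mul_ne_zero h5 h4 (by simpa using h2)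

theorem ger_conn (v vh : ℕ → ℂ) (c : ℂ) (hger : ∀ n, vh (n + 1) - c * vh n = v n)
    (P Ph : ℕ → Polynomial ℂ) (hP : IsSMOP v P) (hPh : IsSMOP vh Ph) (n : ℕ) (t : ℂ)
    (ht : Fl vh (P (n + 1)) + t * Fl vh (P n) = 0) :
    Ph (n + 1) = P (n + 1) + C t * P n := by
  rw [← sub_eq_zero]
  refine smop_zero_s19 hPh (n + 1) _ ?_ ?_
  · rw [degree_lt_iff_coeff_zero]
    intro k hk
    have e1 := (hP.1 (n + 1)).coeff_natDegree
    have e2 := (hPh.1 (n + 1)).coeff_natDegree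
    rw [hP.2.1] at e1
    rw [hPh.2.1] at e2
    have e3 : (P n).coeff k = 0 := coeff_eq_zero_of_natDegree_lt (by rw [hP.2.1]; omega)
    rw [coeff_sub, coeff_add, coeff_C_mul, e3]
    rcases Nat.eq_or_lt_of_le hk with rfl | hk
    · rw [e1, e2]; ring
    · rw [coeff_eq_zero_of_natDegree_lt (p := P (n + 1)) (by rw [hP.2.1]; exact hk),
        coeff_eq_zero_of_natDegree_lt (p := Ph (n + 1)) (by rw [hPh.2.1]; exact hk)]
      ring
  · intro q hq
    rw [sub_mul, map_sub, smop_low hPh (n + 1) (n + 1) le_rfl q hq, zero_sub, neg_eq_zero]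
    have hdec : q = (X - C c) * (q /ₘ (X - C c)) + C (q.eval c) := by
      conv_lhs => rw [← modByMonic_add_div q (X - C c), modByMonic_X_sub_C_eq_C_eval]
      ring
    have hq' : (q /ₘ (X - C c)).degree < n := by
      by_cases h0 : q /ₘ (X - C c) = 0
      · rw [h0, degree_zero]; exact WithBot.bot_lt_coe _
      · rw [← natDegree_lt_iff_degree_lt h0]
        have hq0 : q ≠ 0 := by rintro rfl; simp at h0
        have := (natDegree_lt_iff_degree_lt hq0).2 hq
        have h2 := natDegree_divByMonic q (monic_X_sub_C c)
        rw [natDegree_X_sub_C] at h2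
        by_cases h3 : q.natDegree = 0
        · exfalso; apply h0
          rw [divByMonic_eq_zero_iff (monic_X_sub_C c), degree_X_sub_C,
            eq_C_of_natDegree_eq_zero h3]
          exact lt_of_le_of_lt degree_C_le (by norm_num)
        · omega
    set r := q /ₘ (X - C c)
    rw [hdec]
    rw [show (P (n + 1) + C t * P n) * ((X - C c) * r + C (q.eval c))
      = (X - C c) * (P (n + 1) * r + C t * (P n * r))
        + C (q.eval c) * (P (n + 1) + C t * P n) by ring]
    rw [map_add, Fl_C, Fl_ger v vh c hger, map_add, map_add, Fl_C, Fl_C, ht,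
      smop_low hP n n le_rfl r hq',
      smop_low hP (n + 1) n (by omega) r hq']
    ring

theorem ger_D (v vh : ℕ → ℂ) (c : ℂ) (hger : ∀ n, vh (n + 1) - c * vh n = v n)
    (P P1 : ℕ → Polynomial ℂ) (hP : IsSMOP v P) (a b : ℕ → ℂ) (hrec : HasTTRR P a b)
    (hP1 : HasTTRR P1 (fun n => a (n + 1)) (fun n => b (n + 1))) :
    (∀ n, Fl vh (P (n + 2)) = (c - b (n + 1)) * Fl vh (P (n + 1)) - a (n + 1) * Fl vh (P n)) ∧
    (∀ n, Fl vh (P n) = v 0 * (P1prev P1 n).eval c + vh 0 * (P n).eval c) := by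
  obtain ⟨p0, p1, p2⟩ := hrec
  obtain ⟨q0, q1, q2⟩ := hP1
  have hr : ∀ n, Fl vh (P (n + 2)) =
      (c - b (n + 1)) * Fl vh (P (n + 1)) - a (n + 1) * Fl vh (P n) := by
    intro n
    have h := p2 (n + 1) (by omega)
    rw [Nat.add_sub_cancel] at h
    have h2 : P (n + 2) = (X - C c) * P (n + 1) + C c * P (n + 1) - C (b (n + 1)) * P (n + 1)
      - C (a (n + 1)) * P n := by linear_combination -h
    have h3 := smop_low hP (n + 1) (n + 1) le_rfl 1 (by
      rw [degree_one]; exact_mod_cast Nat.succ_pos n)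
    rw [mul_one] at h3
    rw [h2, map_sub, map_sub, map_add, Fl_C, Fl_C, Fl_C, Fl_ger v vh c hger, h3]
    ring
  refine ⟨hr, ?_⟩
  have e0 : Fl vh (P 0) = vh 0 := by rw [p0, Fl_one]
  have hP1' : P 1 = (X - C c) * 1 + C c * 1 - C (b 0) * 1 := by
    rw [p0] at p1; linear_combination -p1
  have key : ∀ n, Fl vh (P n) = v 0 * (P1prev P1 n).eval c + vh 0 * (P n).eval c ∧
      Fl vh (P (n + 1)) = v 0 * (P1prev P1 (n + 1)).eval c + vh 0 * (P (n + 1)).eval c := by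
    intro n
    induction n with
    | zero =>
      constructor
      · rw [e0]; simp [P1prev, p0]
      · rw [zero_add, hP1', map_sub, map_add, Fl_ger v vh c hger, Fl_C, Fl_C, Fl_one, Fl_one]
        simp [P1prev, q0]; ring
    | succ n ih =>
      refine ⟨ih.2, ?_⟩
      rw [hr, ih.1, ih.2]
      have h := congrArg (eval c) (p2 (n + 1) (by omega))
      simp only [eval_add, eval_mul, eval_X, eval_C, Nat.add_sub_cancel] at h
      cases n with
      | zero =>
        have hq := congrArg (eval c) q1
        simp [P1prev, q0] at hq h ⊢
        linear_combination vh 0 * h + v 0 * hq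
      | succ n =>
        have hq := congrArg (eval c) (q2 (n + 1) (by omega))
        simp only [eval_add, eval_mul, eval_X, eval_C, Nat.add_sub_cancel] at hq
        simp [P1prev] at hq h ⊢
        linear_combination vh 0 * h + v 0 * hq
  exact fun n => (key n).1

theorem ttrr_coef {Ph : ℕ → Polynomial ℂ} (hm : ∀ n, (Ph n).Monic)
    (hd : ∀ n, (Ph n).natDegree = n) (n : ℕ) (x y : ℂ)
    (h : C x * Ph (n + 1) + C y * Ph n = 0) : x = 0 ∧ y = 0 := by
  have e : ∀ k, (Ph k).coeff k = 1 := fun k => by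
    have := (hm k).coeff_natDegree
    rwa [hd] at this
  have h1 := congrArg (fun p => coeff p (n + 1)) h
  simp only [coeff_add, coeff_C_mul, e, coeff_zero] at h1
  rw [coeff_eq_zero_of_natDegree_lt (by rw [hd]; omega)] at h1
  have hx : x = 0 := by simpa using h1
  subst hx
  have h2 := congrArg (fun p => coeff p n) h
  simp [coeff_add, coeff_C_mul, e] at h2
  exact ⟨rfl, h2⟩

theorem mprod_UL (Lh Uh : ℕ → ℕ → ℂ) (ell : ℕ → ℂ)
    (hUh : ∀ i j, Uh i j = if j = i then ell (i + 1) else if j = i + 1 then 1 else 0) (i j : ℕ) :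
    mprod Uh Lh i j = ell (i + 1) * Lh i j + Lh (i + 1) j := by
  rw [mprod, tsum_eq_sum (s := {i, i + 1})]
  · rw [Finset.sum_pair (by omega)]; simp [hUh]
  · intro k hk
    simp only [Finset.mem_insert, Finset.mem_singleton, not_or] at hk
    simp [hUh, hk.1, hk.2]

theorem mprod_LU0 (Lh Uh : ℕ → ℕ → ℂ) (beta : ℕ → ℂ)
    (hLh : ∀ i j, Lh i j = if i = j then 1 else if i = j + 1 then beta i else 0) (j : ℕ) :
    mprod Lh Uh 0 j = Uh 0 j := by
  rw [mprod, tsum_eq_single 0]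
  · simp [hLh]
  · intro k hk
    simp [hLh, Ne.symm hk]

theorem mprod_LU (Lh Uh : ℕ → ℕ → ℂ) (beta : ℕ → ℂ)
    (hLh : ∀ i j, Lh i j = if i = j then 1 else if i = j + 1 then beta i else 0) (i j : ℕ) :
    mprod Lh Uh (i + 1) j = beta (i + 1) * Uh i j + Uh (i + 1) j := by
  rw [mprod, tsum_eq_sum (s := {i, i + 1})]
  · rw [Finset.sum_pair (by omega)]; simp [hLh]
  · intro k hk
    simp only [Finset.mem_insert, Finset.mem_singleton, not_or] at hk
    simp [hLh, Ne.symm hk.1, Ne.symm hk.2]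

/-- `J_α - cI = L̂·Û` and `Ĵ^{(1)} - cI = Û·L̂`, where `L̂` is unit lower
bidiagonal with subdiagonal `β_1, β_2, …` and `Û` is upper bidiagonal with diagonal
`ℓ_1, ℓ_2, …` and superdiagonal `1`. -/
theorem stmt_19 (v : ℕ → ℂ) (c : ℂ) (P : ℕ → Polynomial ℂ) (hP : IsSMOP v P)
    (a b : ℕ → ℂ) (hrec : HasTTRR P a b) (ha : ∀ n, 1 ≤ n → a n ≠ 0)
    (P1 : ℕ → Polynomial ℂ)
    (hP1 : HasTTRR P1 (fun n => a (n + 1)) (fun n => b (n + 1)))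
    (vh : ℕ → ℂ) (hger : ∀ n, vh (n + 1) - c * vh n = v n) (hvh0 : vh 0 ≠ 0)
    (Ph : ℕ → Polynomial ℂ) (hPh : IsSMOP vh Ph)
    (ah bh : ℕ → ℂ) (hrech : HasTTRR Ph ah bh)
    (hcond : ∀ n, 1 ≤ n → v 0 * (P1 (n - 1)).eval c + vh 0 * (P n).eval c ≠ 0)
    (hPhc : ∀ n, (Ph n).eval c ≠ 0)
    (ell beta : ℕ → ℂ)
    (hell : ∀ n, 1 ≤ n → ell n =
      -(v 0 * (P1prev P1 n).eval c + vh 0 * (P n).eval c)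
        / (v 0 * (P1prev P1 (n - 1)).eval c + vh 0 * (P (n - 1)).eval c))
    (hbeta : ∀ n, beta n = -((Ph (n + 1)).eval c / (Ph n).eval c))
    (Lh Uh : ℕ → ℕ → ℂ)
    (hLh : ∀ i j, Lh i j = if i = j then 1 else if i = j + 1 then beta i else 0)
    (hUh : ∀ i j, Uh i j = if j = i then ell (i + 1) else if j = i + 1 then 1 else 0)
    (Jα : ℕ → ℕ → ℂ)
    (hJα : ∀ i j, Jα i j =
      jacobi a (fun n => b n + if n = 0 then -(v 0) / vh 0 else 0) i j) :
    (∀ i j, (Jα i j - if i = j then c else 0) = mprod Lh Uh i j)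
    ∧ (∀ i j, (jacobi (fun n => ah (n + 1)) (fun n => bh (n + 1)) i j
        - if i = j then c else 0) = mprod Uh Lh i j) := by
  obtain ⟨hDr, hD⟩ := ger_D v vh c hger P P1 hP a b hrec hP1
  have hD0 : ∀ n, Fl vh (P n) ≠ 0 := by
    intro n
    cases n with
    | zero => rw [hrec.1, Fl_one]; exact hvh0
    | succ n =>
      rw [hD]
      simpa [P1prev] using hcond (n + 1) (by omega)
  have hl : ∀ n, ell (n + 1) = -Fl vh (P (n + 1)) / Fl vh (P n) := by
    intro n
    rw [hell (n + 1) (by omega), Nat.add_sub_cancel, hD, hD]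
  have hl0 : ∀ n, ell (n + 1) ≠ 0 := fun n => by
    rw [hl]; exact div_ne_zero (neg_ne_zero.2 (hD0 _)) (hD0 _)
  have hconn : ∀ n, Ph (n + 1) = P (n + 1) + C (ell (n + 1)) * P n := fun n =>
    ger_conn v vh c hger P Ph hP hPh n _ (by
      rw [hl]; have := hD0 n; field_simp; ring)
  have hs : ∀ n, ell (n + 2) * ell (n + 1) + a (n + 1) = (b (n + 1) - c) * ell (n + 1) := by
    intro n
    rw [hl, hl, hDr]
    have := hD0 n
    have := hD0 (n + 1)
    field_simp
    ring
  -- the Christoffel relation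
  have hchr' : ∀ n, (X - C c) * P (n + 1) = Ph (n + 2) +
      C (a (n + 1) / ell (n + 1)) * Ph (n + 1) := by
    intro n
    have h := hrec.2.2 (n + 1) (by omega)
    rw [Nat.add_sub_cancel] at h
    have e1 : a (n + 1) / ell (n + 1) * ell (n + 1) = a (n + 1) := div_mul_cancel₀ _ (hl0 n)
    have e2 : ell (n + 2) + a (n + 1) / ell (n + 1) = b (n + 1) - c := by
      have := hl0 n
      have := hs n
      field_simp
      linear_combination this
    have e1' := congrArg C e1
    have e2' := congrArg C e2
    simp only [C_mul, C_add, C_sub] at e1' e2'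
    rw [hconn (n + 1), hconn n]
    linear_combination h - P n * e1' - P (n + 1) * e2'
  have hbe : ∀ n, a (n + 1) / ell (n + 1) = beta (n + 1) := by
    intro n
    have h := congrArg (eval c) (hchr' n)
    simp only [eval_mul, eval_sub, eval_add, eval_X, eval_C, sub_self, zero_mul] at h
    rw [hbeta]
    have := hPhc (n + 1)
    rw [← neg_div, eq_div_iff this]
    linear_combination -h
  have hchr : ∀ n, (X - C c) * P n = Ph (n + 1) + C (beta n) * Ph n := by
    intro n
    cases n with
    | zero =>
      have h := hrech.2.1
      have h' := congrArg (eval c) h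
      rw [hbeta 0, hrec.1, hrech.1]
      rw [hrech.1] at h h'
      simp at h'
      have h2 := congrArg C h'
      simp only [C_add] at h2
      simp only [zero_add, eval_one, div_one, C_neg]
      linear_combination h - h2
    | succ n => rw [hchr' n, hbe]
  have hA : ∀ n, beta (n + 1) * ell (n + 1) = a (n + 1) := fun n => by
    rw [← hbe]; exact div_mul_cancel₀ _ (hl0 n)
  have hB : ∀ n, ell (n + 2) + beta (n + 1) = b (n + 1) - c := fun n => by
    apply mul_right_cancel₀ (hl0 n)
    linear_combination hs n + hA n
  have hB0 : ell 1 = b 0 - v 0 / vh 0 - c := by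
    have h := congrArg (eval c) hrec.2.1
    rw [hrec.1] at h
    simp at h
    rw [hell 1 le_rfl]
    simp [P1prev, hP1.1, hrec.1]
    field_simp
    linear_combination vh 0 * h
  have hH : ∀ n, beta (n + 1) + ell (n + 1) - (bh (n + 1) - c) = 0 ∧
      ell (n + 1) * beta n - ah (n + 1) = 0 := by
    intro n
    apply ttrr_coef hPh.1 hPh.2.1 n
    have h := hrech.2.2 (n + 1) (by omega)
    rw [Nat.add_sub_cancel] at h
    simp only [C_sub, C_add, C_mul]
    linear_combination h - hchr (n + 1) - C (ell (n + 1)) * hchr n - (X - C c) * hconn n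
  constructor
  · intro i j
    rw [hJα]
    cases i with
    | zero =>
      rw [mprod_LU0 Lh Uh beta hLh, hUh, jacobi]
      rcases Nat.lt_trichotomy j 0 with h | h | h
      · omega
      · subst h; simp [hB0]; ring
      · have : j ≠ 0 := by omega
        simp [this, Ne.symm this]
    | succ i =>
      rw [mprod_LU Lh Uh beta hLh, hUh, hUh, jacobi]
      by_cases h1 : j = i
      · subst h1; simp [hA, show j ≠ j + 1 + 1 by omega]
      by_cases h2 : j = i + 1
      · subst h2; simp; linear_combination -hB i
      by_cases h3 : j = i + 2
      · subst h3; simp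
      have h4 : i ≠ j := Ne.symm h1
      have h5 : i + 1 ≠ j := Ne.symm h2
      simp [h1, h2, h3, h4, h5]
  · intro i j
    rw [mprod_UL Lh Uh ell hUh, hLh, hLh, jacobi]
    by_cases h1 : j = i
    · subst h1; simp; linear_combination -(hH j).1
    by_cases h2 : j = i + 1
    · subst h2; simp [show i ≠ i + 1 + 1 by omega]
    have h4 : i ≠ j := Ne.symm h1
    have h5 : i + 1 ≠ j := Ne.symm h2
    by_cases h3 : i = j + 1
    · subst h3; simp [h2, h5]; linear_combination -(hH (j + 1)).2
    simp [h1, h2, h3, h4, h5]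
end
end
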